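/- arXiv:1710.00694 — 5 statements merged into one kernel-verified Lean document; each statement's English description precedes it below -/
import Mathlib

section
/- Assume ω₀ > 0 and that each edge (j,k) ∈ E carries a resistance r_{jk} > 0 and inductance ℓ_{jk} = ρ r_{jk} with a common ratio ρ > 0, and that the edge weights are w_{jk} = 1/√(r_{jk}² + ω₀²ℓ_{jk}²). Let κ := arctan(ρω₀) and define, for each k, the power set-points p*_k := Σ_{j:(j,k)∈E} ( v*_k² r_{jk} − v*_k v*_j ( r_{jk} cos(θ*_{jk}) + ω₀ℓ_{jk} sin(θ*_{jk}) ) ) / (r_{jk}² + ω₀²ℓ_{jk}²) and q*_k := Σ_{j:(j,k)∈E} ( v*_k² ω₀ℓ_{jk} − v*_k v*_j ( ω₀ℓ_{jk} cos(θ*_{jk}) − r_{jk} sin(θ*_{jk}) ) ) / (r_{jk}² + ω₀²ℓ_{jk}²). Then for every k, K_k = (1/v*_k²) R(κ) [[p*_k, q*_k], [−q*_k, p*_k]]. -/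
noncomputable section

open Real Matrix MeasureTheory Metric
open scoped BigOperators

/-- ℝ² with the Euclidean norm. -/
abbrev E2 : Type := EuclideanSpace ℝ (Fin 2)

/-- The state space ℝ^{2N}: N blocks of ℝ², with the Euclidean norm. -/
abbrev St (N : ℕ) : Type := EuclideanSpace ℝ (Fin N × Fin 2)

/-- The 2×2 rotation matrix R(θ). -/
def Rot (θ : ℝ) : Matrix (Fin 2) (Fin 2) ℝ :=
  !![Real.cos θ, -Real.sin θ; Real.sin θ, Real.cos θ]

def toE2 (x : Fin 2 → ℝ) : E2 := (WithLp.equiv 2 (Fin 2 → ℝ)).symm x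
def ofE2 (x : E2) : Fin 2 → ℝ := WithLp.equiv 2 (Fin 2 → ℝ) x
def toSt {N : ℕ} (x : Fin N × Fin 2 → ℝ) : St N :=
  (WithLp.equiv 2 (Fin N × Fin 2 → ℝ)).symm x
def ofSt {N : ℕ} (v : St N) : Fin N × Fin 2 → ℝ := WithLp.equiv 2 (Fin N × Fin 2 → ℝ) v

/-- The k-th ℝ²-block of a state vector. -/
def blk {N : ℕ} (v : St N) (k : Fin N) : E2 := toE2 fun i => ofSt v (k, i)

/-- Action of a 2×2 matrix on ℝ². -/
def act2 (M : Matrix (Fin 2) (Fin 2) ℝ) (x : E2) : E2 := toE2 (M.mulVec (ofE2 x))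

/-- Action of a 2N×2N matrix on the state space. -/
def act {N : ℕ} (M : Matrix (Fin N × Fin 2) (Fin N × Fin 2) ℝ) (v : St N) : St N :=
  toSt (M.mulVec (ofSt v))

/-- Block-diagonal 2N×2N matrix built from N 2×2 blocks. -/
def blockDiag {N : ℕ} (d : Fin N → Matrix (Fin 2) (Fin 2) ℝ) :
    Matrix (Fin N × Fin 2) (Fin N × Fin 2) ℝ :=
  Matrix.of fun p q => if p.1 = q.1 then d p.1 p.2 q.2 else 0

/-- 𝓙 = I_N ⊗ J where J = R(π/2). -/
def Jbig (N : ℕ) : Matrix (Fin N × Fin 2) (Fin N × Fin 2) ℝ :=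
  blockDiag fun _ => Rot (π / 2)

/-- The weighted graph Laplacian L (with the convention w k k = 0). -/
def lapMat {N : ℕ} (w : Fin N → Fin N → ℝ) : Matrix (Fin N) (Fin N) ℝ :=
  Matrix.of fun k j => if k = j then ∑ l, w k l else -(w k j)

/-- 𝓛 = L ⊗ I₂. -/
def Lbig {N : ℕ} (w : Fin N → Fin N → ℝ) : Matrix (Fin N × Fin 2) (Fin N × Fin 2) ℝ :=
  Matrix.of fun p q => lapMat w p.1 q.1 * (if p.2 = q.2 then 1 else 0)

/-- K_k = Σ_j w_{jk} (I₂ − (v*_j/v*_k) R(θ*_{jk})). -/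
def Kmat {N : ℕ} (w : Fin N → Fin N → ℝ) (vst θs : Fin N → ℝ) (k : Fin N) :
    Matrix (Fin 2) (Fin 2) ℝ :=
  ∑ j, w j k • ((1 : Matrix (Fin 2) (Fin 2) ℝ) - (vst j / vst k) • Rot (θs j - θs k))

/-- 𝓚 = blockdiag(K₁,…,K_N). -/
def Kbig {N : ℕ} (w : Fin N → Fin N → ℝ) (vst θs : Fin N → ℝ) :
    Matrix (Fin N × Fin 2) (Fin N × Fin 2) ℝ :=
  blockDiag (Kmat w vst θs)

/-- The diagonal matrix Φ(v) = blockdiag(Φ_k(v_k) I₂). -/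
def PhiMat {N : ℕ} (vst : Fin N → ℝ) (v : St N) :
    Matrix (Fin N × Fin 2) (Fin N × Fin 2) ℝ :=
  Matrix.diagonal fun p => (vst p.1 - ‖blk v p.1‖) / vst p.1

/-- The closed-loop vector field f(v) = (ω₀𝓙 + η(𝓚 − 𝓛) + αΦ(v))v. -/
def fcl {N : ℕ} (w : Fin N → Fin N → ℝ) (vst θs : Fin N → ℝ) (ω₀ η α : ℝ) (v : St N) :
    St N :=
  act (ω₀ • Jbig N + η • (Kbig w vst θs - Lbig w) + α • PhiMat vst v) v

/-- The rotating-frame vector field f̄(v̄) = η(𝓚 − 𝓛)v̄ + αΦ(v̄)v̄. -/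
def fbar {N : ℕ} (w : Fin N → Fin N → ℝ) (vst θs : Fin N → ℝ) (η α : ℝ) (v : St N) :
    St N :=
  act (η • (Kbig w vst θs - Lbig w) + α • PhiMat vst v) v

/-- v : ℝ → St N is a (global) solution of dx/dt = g(x). -/
def IsSol {N : ℕ} (g : St N → St N) (v : ℝ → St N) : Prop :=
  ∀ t : ℝ, HasDerivAt v (g (v t)) t

/-- The set S of states with the prescribed relative phase angles (and magnitude ratios). -/
def Sset {N : ℕ} [NeZero N] (vst θs : Fin N → ℝ) : Set (St N) :=
  {v | ∀ k, (vst k)⁻¹ • blk v k = act2 (Rot (θs k)) ((vst 0)⁻¹ • blk v 0)}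

/-- The set A of states with the prescribed magnitudes. -/
def Aset {N : ℕ} (vst : Fin N → ℝ) : Set (St N) :=
  {v | ∀ k, ‖blk v k‖ = vst k}

/-- The set F_{g,ω} of synchronous points: g(v) = ω𝓙v. -/
def Fset {N : ℕ} (g : St N → St N) (ω : ℝ) : Set (St N) :=
  {v | g v = ω • act (Jbig N) v}

/-- The target set T_{g,ω} = S ∩ F_{g,ω} ∩ A. -/
def Tset {N : ℕ} [NeZero N] (vst θs : Fin N → ℝ) (g : St N → St N) (ω : ℝ) : Set (St N) :=
  Sset vst θs ∩ Fset g ω ∩ Aset vst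

/-- The second-smallest eigenvalue of a graph Laplacian, via the Courant–Fischer
characterization: the minimum of the Rayleigh quotient over unit vectors orthogonal to
the all-ones vector (an eigenvector for the smallest eigenvalue 0 of a Laplacian). -/
def lambda2 {N : ℕ} (L : Matrix (Fin N) (Fin N) ℝ) : ℝ :=
  sInf {r | ∃ x : Fin N → ℝ, (∑ k, x k ^ 2) = 1 ∧ (∑ k, x k) = 0 ∧ r = x ⬝ᵥ L.mulVec x}

/-- The simple graph with an edge between j ≠ k whenever w j k ≠ 0. -/
def wGraph {N : ℕ} (w : Fin N → Fin N → ℝ) : SimpleGraph (Fin N) :=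
  SimpleGraph.fromRel fun j k => w j k ≠ 0

/-- Condition 1 (the stability condition). -/
def Cond1 {N : ℕ} (w : Fin N → Fin N → ℝ) (vst θs : Fin N → ℝ) (η α : ℝ) : Prop :=
  (∀ k, θs k ∈ Set.Icc (0 : ℝ) (π / 2)) ∧
  (⨆ k, ∑ j, w j k * |1 - vst j / vst k * Real.cos (θs j - θs k)|) + α / η
    < 1 / 2 * ((⨅ k, vst k) ^ 2 / (⨆ k, vst k) ^ 2) * lambda2 (lapMat w)

/-- The 2N×2 matrix 𝐒 with k-th block v*_k R(θ*_{k1}), normalized so that 𝐒ᵀ𝐒 = I₂. -/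
def Smat {N : ℕ} (vst θs : Fin N → ℝ) : Matrix (Fin N × Fin 2) (Fin 2) ℝ :=
  Matrix.of fun p i => (Real.sqrt (∑ n, vst n ^ 2))⁻¹ * (vst p.1 * Rot (θs p.1) p.2 i)

/-- P = I − 𝐒𝐒ᵀ, the orthogonal projector onto the orthogonal complement of range 𝐒. -/
def Pmat {N : ℕ} (vst θs : Fin N → ℝ) : Matrix (Fin N × Fin 2) (Fin N × Fin 2) ℝ :=
  1 - Smat vst θs * (Smat vst θs)ᵀ

/-- The subspace S, realized as the range of 𝐒. -/
def SsetR {N : ℕ} (vst θs : Fin N → ℝ) : Set (St N) :=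
  {v | ∃ c : Fin 2 → ℝ, v = toSt ((Smat vst θs).mulVec c)}

/-- The quadratic form vᵀ M v. -/
def qf {N : ℕ} (M : Matrix (Fin N × Fin 2) (Fin N × Fin 2) ℝ) (v : St N) : ℝ :=
  ofSt v ⬝ᵥ M.mulVec (ofSt v)

/-- The largest singular value of a matrix: its ℓ² → ℓ² operator norm. -/
def sigmaMax {N : ℕ} (M : Matrix (Fin N × Fin 2) (Fin N × Fin 2) ℝ) : ℝ :=
  ‖LinearMap.toContinuousLinearMap (Matrix.toEuclideanLin M)‖

/-- the matrices K_k can be written as (1/v*_k²) R(κ) [[p*_k, q*_k],[−q*_k, p*_k]]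
in terms of the power set-points. -/
theorem stmt2 (N : ℕ) [NeZero N] (hN : 2 ≤ N)
    (A : Fin N → Fin N → Bool)
    (hA_symm : ∀ j k, A j k = A k j) (hA_irrefl : ∀ k, A k k = false)
    (hAconn : (SimpleGraph.fromRel fun j k => A j k = true).Connected)
    (r : Fin N → Fin N → ℝ) (hr_symm : ∀ j k, r j k = r k j)
    (hr_pos : ∀ j k, A j k = true → 0 < r j k)
    (ρ : ℝ) (hρ : 0 < ρ) (ω₀ : ℝ) (hω₀ : 0 < ω₀)
    (w : Fin N → Fin N → ℝ)
    (hw : ∀ j k, w j k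
      = if A j k then (Real.sqrt (r j k ^ 2 + ω₀ ^ 2 * (ρ * r j k) ^ 2))⁻¹ else 0)
    (vst : Fin N → ℝ) (hvst : ∀ k, 0 < vst k)
    (θs : Fin N → ℝ) (hθ0 : θs 0 = 0) (hθmem : ∀ k, θs k ∈ Set.Icc (0 : ℝ) (2 * π))
    (p q : Fin N → ℝ)
    (hp : ∀ k, p k = ∑ j, if A j k then
        (vst k ^ 2 * r j k - vst k * vst j *
            (r j k * Real.cos (θs j - θs k) + ω₀ * (ρ * r j k) * Real.sin (θs j - θs k)))
          / (r j k ^ 2 + ω₀ ^ 2 * (ρ * r j k) ^ 2) else 0)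
    (hq : ∀ k, q k = ∑ j, if A j k then
        (vst k ^ 2 * (ω₀ * (ρ * r j k)) - vst k * vst j *
            (ω₀ * (ρ * r j k) * Real.cos (θs j - θs k) - r j k * Real.sin (θs j - θs k)))
          / (r j k ^ 2 + ω₀ ^ 2 * (ρ * r j k) ^ 2) else 0) :
    ∀ k, Kmat w vst θs k
      = (vst k ^ 2)⁻¹ • (Rot (Real.arctan (ρ * ω₀)) * !![p k, q k; -q k, p k]) := by
  intro k
  have hvk : vst k ≠ 0 := (hvst k).ne'
  obtain ⟨S, hSdef⟩ : ∃ S, S = Real.sqrt (1 + (ρ * ω₀) ^ 2) := ⟨_, rfl⟩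
  have hSpos : 0 < S := by rw [hSdef]; positivity
  have hS2 : S ^ 2 = 1 + (ρ * ω₀) ^ 2 := by rw [hSdef]; exact Real.sq_sqrt (by positivity)
  have hc : Real.cos (Real.arctan (ρ * ω₀)) = 1 / S := by rw [Real.cos_arctan, hSdef]
  have hs : Real.sin (Real.arctan (ρ * ω₀)) = ρ * ω₀ / S := by rw [Real.sin_arctan, hSdef]
  have hD : ∀ j, r j k ^ 2 + ω₀ ^ 2 * (ρ * r j k) ^ 2 = (r j k * S) ^ 2 := by
    intro j; rw [mul_pow (r j k) S, hS2]; ring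
  have e1 : ∑ j, w j k * (1 - vst j / vst k * Real.cos (θs j - θs k))
      = (vst k ^ 2)⁻¹ * (1 / S * p k + ρ * ω₀ / S * q k) := by
    rw [hp, hq, Finset.mul_sum, Finset.mul_sum, ← Finset.sum_add_distrib, Finset.mul_sum]
    refine Finset.sum_congr rfl fun j _ => ?_
    rw [hw]
    by_cases h : A j k = true
    · have hr := hr_pos j k h
      simp only [h, if_true]
      rw [hD, Real.sqrt_sq (by positivity)]
      field_simp
      rw [hS2]; ring
    · simp [h]
  have e2 : ∑ j, w j k * (vst j / vst k * Real.sin (θs j - θs k))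
      = (vst k ^ 2)⁻¹ * (1 / S * q k - ρ * ω₀ / S * p k) := by
    rw [hp, hq, Finset.mul_sum, Finset.mul_sum, ← Finset.sum_sub_distrib, Finset.mul_sum]
    refine Finset.sum_congr rfl fun j _ => ?_
    rw [hw]
    by_cases h : A j k = true
    · have hr := hr_pos j k h
      simp only [h, if_true]
      rw [hD, Real.sqrt_sq (by positivity)]
      field_simp
      rw [hS2]; ring
    · simp [h]
  have e3 : ∑ j, -(w j k * (vst j / vst k * Real.sin (θs j - θs k)))
      = (vst k ^ 2)⁻¹ * (ρ * ω₀ / S * p k - 1 / S * q k) := by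
    rw [Finset.sum_neg_distrib, e2]; ring
  ext a b
  fin_cases a <;> fin_cases b <;>
    simp [Kmat, Matrix.sum_apply, Rot, Matrix.mul_apply, Fin.sum_univ_two, hc, hs,
      -Finset.sum_neg_distrib]
  · rw [e1]; ring
  · rw [e2]; ring
  · rw [e3]; ring
  · rw [e1]; ring
end
end

section
/- For every v ∈ ℝ^{2N} it holds that vᵀ P Φ(v) v ≤ vᵀ P v, where P = I_{2N} − 𝐒𝐒ᵀ is the orthogonal projector onto the orthogonal complement of the subspace S = range(𝐒). -/
noncomputable section

open Real Matrix MeasureTheory Metric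
open scoped BigOperators

lemma core_cheb {N : ℕ} (w a : Fin N → ℝ) (hw : ∀ k, 0 ≤ w k) (ha : ∀ k, 0 ≤ a k) :
    ∑ j, ∑ k, w j * w k * (a j * a k ^ 2) ≤ (∑ j, w j) * ∑ k, w k * a k ^ 3 := by
  have e1 : (∑ j, w j) * ∑ k, w k * a k ^ 3 = ∑ j, ∑ k, w j * w k * a k ^ 3 := by
    rw [Finset.sum_mul_sum]
    exact Finset.sum_congr rfl fun j _ => Finset.sum_congr rfl fun k _ => by ring
  have e2 : ∑ j, ∑ k, w j * w k * a k ^ 3 = ∑ j, ∑ k, w j * w k * a j ^ 3 := by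
    rw [Finset.sum_comm]
    exact Finset.sum_congr rfl fun j _ => Finset.sum_congr rfl fun k _ => by ring
  have e3 : ∑ j, ∑ k, w j * w k * (a j * a k ^ 2) = ∑ j, ∑ k, w j * w k * (a k * a j ^ 2) := by
    rw [Finset.sum_comm]
    exact Finset.sum_congr rfl fun j _ => Finset.sum_congr rfl fun k _ => by ring
  have e4 : 0 ≤ ∑ j, ∑ k, w j * w k * ((a j + a k) * (a j - a k) ^ 2) :=
    Finset.sum_nonneg fun j _ => Finset.sum_nonneg fun k _ =>
      mul_nonneg (mul_nonneg (hw j) (hw k))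
        (mul_nonneg (add_nonneg (ha j) (ha k)) (sq_nonneg _))
  have e5 : ∑ j, ∑ k, w j * w k * ((a j + a k) * (a j - a k) ^ 2)
      = ∑ j, ∑ k, w j * w k * a j ^ 3 + ∑ j, ∑ k, w j * w k * a k ^ 3
        - ∑ j, ∑ k, w j * w k * (a j * a k ^ 2) - ∑ j, ∑ k, w j * w k * (a k * a j ^ 2) := by
    simp only [← Finset.sum_add_distrib, ← Finset.sum_sub_distrib]
    exact Finset.sum_congr rfl fun j _ => Finset.sum_congr rfl fun k _ => by ring
  linarith

lemma core_vec {N : ℕ} (w a : Fin N → ℝ) (hw : ∀ k, 0 ≤ w k) (ha : ∀ k, 0 ≤ a k)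
    (g : Fin N → Fin 2 → ℝ) (hg : ∀ k, g k 0 ^ 2 + g k 1 ^ 2 = (w k * a k) ^ 2) :
    ∑ i, (∑ j, g j i) * (∑ k, a k * g k i) ≤ (∑ j, w j) * ∑ k, w k * a k ^ 3 := by
  refine le_trans ?_ (core_cheb w a hw ha)
  simp only [Fin.sum_univ_two, Finset.sum_mul_sum, ← Finset.sum_add_distrib]
  refine Finset.sum_le_sum fun j _ => Finset.sum_le_sum fun k _ => ?_
  have hc : g j 0 * g k 0 + g j 1 * g k 1 ≤ (w j * a j) * (w k * a k) := by
    refine abs_le_of_sq_le_sq' ?_ ?_ |>.2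
    · have : ((w j * a j) * (w k * a k)) ^ 2
        = (g j 0 ^ 2 + g j 1 ^ 2) * (g k 0 ^ 2 + g k 1 ^ 2) := by rw [hg, hg]; ring
      rw [this]
      nlinarith [sq_nonneg (g j 0 * g k 1 - g j 1 * g k 0)]
    · exact mul_nonneg (mul_nonneg (hw j) (ha j)) (mul_nonneg (hw k) (ha k))
  nlinarith [mul_le_mul_of_nonneg_left hc (ha k)]

/-- vᵀ P Φ(v) v ≤ vᵀ P v for every v ∈ ℝ^{2N}. -/
theorem stmt7 (N : ℕ) [NeZero N] (hN : 2 ≤ N)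
    (vst : Fin N → ℝ) (hvst : ∀ k, 0 < vst k)
    (θs : Fin N → ℝ) (hθ0 : θs 0 = 0) (hθmem : ∀ k, θs k ∈ Set.Icc (0 : ℝ) (2 * π))
    (v : St N) :
    qf (Pmat vst θs * PhiMat vst v) v ≤ qf (Pmat vst θs) v := by
  set x := ofSt v with hx
  set a : Fin N → ℝ := fun k => ‖blk v k‖ / vst k with ha
  have ha0 : ∀ k, 0 ≤ a k := fun k => div_nonneg (norm_nonneg _) (hvst k).le
  set y : Fin N × Fin 2 → ℝ := fun p => a p.1 * x p with hy
  have hxa : ∀ k, x (k, 0) ^ 2 + x (k, 1) ^ 2 = (vst k * a k) ^ 2 := by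
    intro k
    have h1 : vst k * a k = ‖blk v k‖ := by
      have := (hvst k).ne'
      simp only [ha]; field_simp
    rw [h1, EuclideanSpace.norm_sq_eq]
    simp [Fin.sum_univ_two, blk, toE2, hx]
  have hPhi : PhiMat vst v *ᵥ x = x - y := by
    ext p
    have := (hvst p.1).ne'
    simp only [PhiMat, mulVec_diagonal, Pi.sub_apply, hy, ha]
    field_simp
  have hSm : ∀ z : Fin N × Fin 2 → ℝ,
      x ⬝ᵥ (Pmat vst θs *ᵥ z) = x ⬝ᵥ z - (x ᵥ* Smat vst θs) ⬝ᵥ (z ᵥ* Smat vst θs) := by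
    intro z
    rw [Pmat, sub_mulVec, one_mulVec, dotProduct_sub, ← mulVec_mulVec, dotProduct_mulVec,
      mulVec_transpose]
  have key : (x ᵥ* Smat vst θs) ⬝ᵥ (y ᵥ* Smat vst θs) ≤ x ⬝ᵥ y := by
    set g : Fin N → Fin 2 → ℝ := fun k i =>
      vst k * (x (k, 0) * Rot (θs k) 0 i + x (k, 1) * Rot (θs k) 1 i) with hg
    set W := ∑ n, vst n ^ 2 with hW
    have hWpos : 0 < W := Finset.sum_pos (fun k _ => pow_pos (hvst k) 2) ⟨0, Finset.mem_univ _⟩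
    have c := core_vec (fun k => vst k ^ 2) a (fun k => sq_nonneg _) ha0 g (by
      intro k
      have h2 : g k 0 ^ 2 + g k 1 ^ 2 = vst k ^ 2 * (x (k, 0) ^ 2 + x (k, 1) ^ 2)
          * (Real.sin (θs k) ^ 2 + Real.cos (θs k) ^ 2) := by
        simp [hg, Rot, -Real.sin_sq_add_cos_sq]; ring
      rw [h2, Real.sin_sq_add_cos_sq, hxa]; ring)
    have h3 : ∀ i, (x ᵥ* Smat vst θs) i = (√W)⁻¹ * ∑ k, g k i := by
      intro i
      simp only [vecMul, dotProduct, Smat, Fintype.sum_prod_type, Fin.sum_univ_two, of_apply,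
        Finset.mul_sum, hg]
      exact Finset.sum_congr rfl fun k _ => by ring
    have h4 : ∀ i, (y ᵥ* Smat vst θs) i = (√W)⁻¹ * ∑ k, a k * g k i := by
      intro i
      simp only [vecMul, dotProduct, Smat, Fintype.sum_prod_type, Fin.sum_univ_two, of_apply,
        Finset.mul_sum, hg, hy]
      exact Finset.sum_congr rfl fun k _ => by ring
    have h5 : x ⬝ᵥ y = ∑ k, vst k ^ 2 * a k ^ 3 := by
      simp only [dotProduct, Fintype.sum_prod_type, Fin.sum_univ_two, hy]
      refine Finset.sum_congr rfl fun k _ => ?_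
      linear_combination a k * hxa k
    have h6 : (x ᵥ* Smat vst θs) ⬝ᵥ (y ᵥ* Smat vst θs)
        = W⁻¹ * ∑ i, (∑ j, g j i) * (∑ k, a k * g k i) := by
      have h7 : (√W)⁻¹ * (√W)⁻¹ = W⁻¹ := by
        rw [← mul_inv, Real.mul_self_sqrt hWpos.le]
      simp only [dotProduct, h3, h4]
      rw [← h7, Finset.mul_sum]
      exact Finset.sum_congr rfl fun k _ => by ring
    rw [h6, h5, inv_mul_le_iff₀ hWpos]
    exact c
  simp only [qf]
  rw [← hx, ← mulVec_mulVec, hPhi, mulVec_sub, dotProduct_sub, hSm y]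
  linarith
end
end

section
/- Under Condition 1, for every v in the orthogonal complement of the subspace S = range(𝐒) with v ≠ 0, it holds that vᵀ [ η( (𝓚 − 𝓛)ᵀP + P(𝓚 − 𝓛) ) + 2αP ] v < 0, where P = I_{2N} − 𝐒𝐒ᵀ. -/
noncomputable section

open Real Matrix MeasureTheory Metric
open scoped BigOperators

set_option maxHeartbeats 1000000

theorem aux_lap {N : ℕ} (w : Fin N → Fin N → ℝ)
    (hs : ∀ j k, w j k = w k j) (hi : ∀ k, w k k = 0) (x : Fin N → ℝ) :
    x ⬝ᵥ (lapMat w).mulVec x = 1 / 2 * ∑ j, ∑ k, w j k * (x j - x k) ^ 2 := by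
  have h1 : ∀ k, (lapMat w).mulVec x k = (∑ l, w k l) * x k - ∑ l, w k l * x l := by
    intro k
    have : ∀ j, lapMat w k j * x j = (if k = j then (∑ l, w k l) * x j else 0) - w k j * x j := by
      intro j
      by_cases h : k = j
      · subst h; simp [lapMat, hi]
      · simp [lapMat, h]
    simp only [Matrix.mulVec, dotProduct, this, Finset.sum_sub_distrib, Finset.sum_ite_eq,
      Finset.mem_univ, if_true]
  have h2 : ∑ j, ∑ k, w j k * (x k ^ 2) = ∑ j, ∑ k, w j k * (x j ^ 2) := by
    rw [Finset.sum_comm]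
    exact Finset.sum_congr rfl fun j _ => Finset.sum_congr rfl fun k _ => by rw [hs]
  have h3 : ∑ j, ∑ k, w j k * (x j - x k) ^ 2 = ∑ j, ∑ k, w j k * (x j ^ 2)
      + ∑ j, ∑ k, w j k * (x k ^ 2) - 2 * ∑ j, ∑ k, w j k * (x j * x k) := by
    simp only [Finset.mul_sum, ← Finset.sum_add_distrib, ← Finset.sum_sub_distrib]
    exact Finset.sum_congr rfl fun j _ => Finset.sum_congr rfl fun k _ => by ring
  rw [h3, h2]
  have h4 : x ⬝ᵥ (lapMat w).mulVec x = ∑ j, ∑ k, w j k * (x j ^ 2)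
      - ∑ j, ∑ k, w j k * (x j * x k) := by
    simp only [dotProduct, h1, ← Finset.sum_sub_distrib, Finset.sum_mul, Finset.mul_sum, mul_sub]
    exact Finset.sum_congr rfl fun j _ => Finset.sum_congr rfl fun k _ => by ring
  rw [h4]; ring

theorem aux_lam {N : ℕ} (hN : 0 < N) (w : Fin N → Fin N → ℝ)
    (hs : ∀ j k, w j k = w k j) (hi : ∀ k, w k k = 0) (hn : ∀ j k, 0 ≤ w j k)
    (x : Fin N → ℝ) :
    lambda2 (lapMat w) * (∑ k, x k ^ 2 - (∑ k, x k) ^ 2 / N) ≤ x ⬝ᵥ (lapMat w).mulVec x := by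
  have hNr : (0 : ℝ) < N := by exact_mod_cast hN
  have hpos : ∀ y : Fin N → ℝ, 0 ≤ y ⬝ᵥ (lapMat w).mulVec y := by
    intro y
    rw [aux_lap w hs hi]
    have : 0 ≤ ∑ j, ∑ k, w j k * (y j - y k) ^ 2 :=
      Finset.sum_nonneg fun j _ => Finset.sum_nonneg fun k _ => mul_nonneg (hn j k) (sq_nonneg _)
    linarith
  set μ := (∑ k, x k) / N with hμ
  set z : Fin N → ℝ := fun k => x k - μ with hz
  have hz0 : ∑ k, z k = 0 := by
    simp only [hz, Finset.sum_sub_distrib, Finset.sum_const, Finset.card_univ, Fintype.card_fin,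
      nsmul_eq_mul, hμ]
    field_simp
    ring
  have hz2 : ∑ k, z k ^ 2 = ∑ k, x k ^ 2 - (∑ k, x k) ^ 2 / N := by
    have : ∀ k, z k ^ 2 = x k ^ 2 - (2 * μ) * x k + μ ^ 2 := fun k => by simp only [hz]; ring
    simp only [this, Finset.sum_add_distrib, Finset.sum_sub_distrib, ← Finset.mul_sum,
      Finset.sum_const, Finset.card_univ, Fintype.card_fin, nsmul_eq_mul, hμ]
    field_simp
    ring
  have hzl : z ⬝ᵥ (lapMat w).mulVec z = x ⬝ᵥ (lapMat w).mulVec x := by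
    rw [aux_lap w hs hi, aux_lap w hs hi]
    simp [hz]
  rw [← hz2, ← hzl]
  set q := ∑ k, z k ^ 2 with hq
  have hq0 : 0 ≤ q := Finset.sum_nonneg fun k _ => sq_nonneg _
  rcases hq0.eq_or_lt with h | h
  · rw [← h, mul_zero]; exact hpos z
  · have hle : lambda2 (lapMat w) ≤ (z ⬝ᵥ (lapMat w).mulVec z) / q := by
      apply csInf_le
      · refine ⟨0, ?_⟩
        rintro r ⟨y, _, _, rfl⟩
        exact hpos y
      · refine ⟨fun k => (√q)⁻¹ * z k, ?_, ?_, ?_⟩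
        · simp only [mul_pow, ← Finset.mul_sum, inv_pow, Real.sq_sqrt hq0, ← hq]
          exact inv_mul_cancel₀ h.ne'
        · rw [← Finset.mul_sum, hz0, mul_zero]
        · have e : (fun k => (√q)⁻¹ * z k) = (√q)⁻¹ • z := by ext k; simp
          rw [e, Matrix.mulVec_smul, dotProduct_smul, smul_dotProduct, smul_eq_mul, smul_eq_mul,
            ← mul_assoc, ← mul_inv, Real.mul_self_sqrt hq0, div_eq_inv_mul]
    rwa [le_div_iff₀ h] at hle

theorem aux_cs {N : ℕ} (a b x y : Fin N → ℝ) (Q T : ℝ) (hQ : Q = ∑ k, (a k ^ 2 + b k ^ 2))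
    (hQ0 : 0 < Q) (hT : 0 < T)
    (h1 : ∑ k, (a k * x k + b k * y k) = 0) (h2 : ∑ k, (b k * x k - a k * y k) = 0)
    (hle : N - ((∑ k, a k) ^ 2 + (∑ k, b k) ^ 2) / Q ≤ T) :
    (∑ k, x k) ^ 2 + (∑ k, y k) ^ 2 ≤ T * ∑ k, (x k ^ 2 + y k ^ 2) := by
  set A := ∑ k, a k with hA
  set B := ∑ k, b k with hB
  set X := ∑ k, x k with hX
  set Y := ∑ k, y k with hY
  set V := ∑ k, (x k ^ 2 + y k ^ 2) with hV
  have key : ∑ k, ((T * x k - (X * (1 - (A * a k + B * b k) / Q) + Y * ((A * b k - B * a k) / Q))) ^ 2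
      + (T * y k - (-X * ((A * b k - B * a k) / Q) + Y * (1 - (A * a k + B * b k) / Q))) ^ 2)
      = T ^ 2 * V - 2 * T * (X ^ 2 + Y ^ 2) + (X ^ 2 + Y ^ 2) * (N - (A ^ 2 + B ^ 2) / Q) := by
    have e : ∀ k, ((T * x k - (X * (1 - (A * a k + B * b k) / Q) + Y * ((A * b k - B * a k) / Q))) ^ 2
      + (T * y k - (-X * ((A * b k - B * a k) / Q) + Y * (1 - (A * a k + B * b k) / Q))) ^ 2)
      = T ^ 2 * (x k ^ 2 + y k ^ 2) - (2 * T * X) * x k - (2 * T * Y) * y k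
        + (2 * T * (X * A + Y * B) / Q) * (a k * x k + b k * y k)
        + (2 * T * (X * B - Y * A) / Q) * (b k * x k - a k * y k)
        + (X ^ 2 + Y ^ 2) - (2 * (X ^ 2 + Y ^ 2) * A / Q) * a k - (2 * (X ^ 2 + Y ^ 2) * B / Q) * b k
        + ((X ^ 2 + Y ^ 2) * (A ^ 2 + B ^ 2) / Q ^ 2) * (a k ^ 2 + b k ^ 2) := by
      intro k; ring
    simp only [e]
    simp only [Finset.sum_add_distrib (M := ℝ), Finset.sum_sub_distrib, ← Finset.mul_sum,
      Finset.sum_const, Finset.card_univ, Fintype.card_fin, nsmul_eq_mul] at h1 h2 hQ hV ⊢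
    rw [← hA, ← hB, ← hX, ← hY, ← hQ, ← hV, h1, h2]
    field_simp
    ring
  have hnn := Finset.sum_nonneg (s := Finset.univ) (f := fun k => ((T * x k - (X * (1 - (A * a k + B * b k) / Q) + Y * ((A * b k - B * a k) / Q))) ^ 2
      + (T * y k - (-X * ((A * b k - B * a k) / Q) + Y * (1 - (A * a k + B * b k) / Q))) ^ 2)) (fun k _ => by positivity)
  rw [key] at hnn
  have h5 : (X ^ 2 + Y ^ 2) * (N - (A ^ 2 + B ^ 2) / Q) ≤ (X ^ 2 + Y ^ 2) * T :=
    mul_le_mul_of_nonneg_left hle (by positivity)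
  have h6 : 0 ≤ T * (T * V - (X ^ 2 + Y ^ 2)) := by nlinarith
  have := nonneg_of_mul_nonneg_right h6 hT
  linarith

theorem aux_K {N : ℕ} (w : Fin N → Fin N → ℝ) (vst θs : Fin N → ℝ) (V : Fin N × Fin 2 → ℝ) :
    V ⬝ᵥ (Kbig w vst θs).mulVec V =
      ∑ k, (∑ j, w j k * (1 - vst j / vst k * Real.cos (θs j - θs k)))
        * (V (k, 0) ^ 2 + V (k, 1) ^ 2) := by
  have h00 : ∀ k, Kmat w vst θs k 0 0
      = ∑ j, w j k * (1 - vst j / vst k * Real.cos (θs j - θs k)) := by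
    intro k; simp [Kmat, Rot, Matrix.sum_apply]
  have h11 : ∀ k, Kmat w vst θs k 1 1
      = ∑ j, w j k * (1 - vst j / vst k * Real.cos (θs j - θs k)) := by
    intro k; simp [Kmat, Rot, Matrix.sum_apply]
  have h01 : ∀ k, Kmat w vst θs k 0 1 = - Kmat w vst θs k 1 0 := by
    intro k; simp [Kmat, Rot, Matrix.sum_apply]
  have hm : ∀ k i, (Kbig w vst θs).mulVec V (k, i)
      = Kmat w vst θs k i 0 * V (k, 0) + Kmat w vst θs k i 1 * V (k, 1) := by
    intro k i
    simp [Kbig, _root_.blockDiag, Matrix.mulVec, dotProduct, Fintype.sum_prod_type, Fin.sum_univ_two,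
      Finset.sum_add_distrib]
  simp only [dotProduct, Fintype.sum_prod_type, Fin.sum_univ_two, hm]
  refine Finset.sum_congr rfl fun k _ => ?_
  rw [h01, ← h00]
  have := (h00 k).trans (h11 k).symm
  rw [← this]; ring

theorem aux_L {N : ℕ} (w : Fin N → Fin N → ℝ) (V : Fin N × Fin 2 → ℝ) :
    V ⬝ᵥ (Lbig w).mulVec V =
      (fun k => V (k, 0)) ⬝ᵥ (lapMat w).mulVec (fun k => V (k, 0))
      + (fun k => V (k, 1)) ⬝ᵥ (lapMat w).mulVec (fun k => V (k, 1)) := by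
  simp [Lbig, Matrix.mulVec, dotProduct, Fintype.sum_prod_type, Fin.sum_univ_two,
      Finset.sum_add_distrib]

/-- under Condition 1, the quadratic form
vᵀ[η((𝓚−𝓛)ᵀP + P(𝓚−𝓛)) + 2αP]v is negative on (range 𝐒)^⊥ ∖ {0}. -/
theorem stmt8 (N : ℕ) [NeZero N] (hN : 2 ≤ N)
    (w : Fin N → Fin N → ℝ)
    (hw_symm : ∀ j k, w j k = w k j) (hw_nonneg : ∀ j k, 0 ≤ w j k)
    (hw_irrefl : ∀ k, w k k = 0) (hconn : (wGraph w).Connected)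
    (vst : Fin N → ℝ) (hvst : ∀ k, 0 < vst k)
    (θs : Fin N → ℝ) (hθ0 : θs 0 = 0) (hθmem : ∀ k, θs k ∈ Set.Icc (0 : ℝ) (2 * π))
    (η α : ℝ) (hη : 0 < η) (hα : 0 < α)
    (hcond : Cond1 w vst θs η α)
    (v : St N) (hv : v ≠ 0) (horth : (Smat vst θs)ᵀ.mulVec (ofSt v) = 0) :
    qf (η • ((Kbig w vst θs - Lbig w)ᵀ * Pmat vst θs
              + Pmat vst θs * (Kbig w vst θs - Lbig w))
        + (2 * α) • Pmat vst θs) v < 0 := by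
  obtain ⟨hθ, hc⟩ := hcond
  set V := ofSt v with hVdef
  have hN0 : 0 < N := by omega
  have hNr : (0 : ℝ) < N := by exact_mod_cast hN0
  have hPV : (Pmat vst θs).mulVec V = V := by
    rw [Pmat, Matrix.sub_mulVec, Matrix.one_mulVec, ← Matrix.mulVec_mulVec, horth,
      Matrix.mulVec_zero, sub_zero]
  have hPT : (Pmat vst θs)ᵀ = Pmat vst θs := by
    simp [Pmat, Matrix.transpose_sub, Matrix.transpose_mul]
  have hVP : ∀ u, V ⬝ᵥ (Pmat vst θs).mulVec u = V ⬝ᵥ u := by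
    intro u
    rw [Matrix.dotProduct_mulVec, ← Matrix.mulVec_transpose, hPT, hPV]
  have hMT : ∀ M : Matrix (Fin N × Fin 2) (Fin N × Fin 2) ℝ,
      V ⬝ᵥ Mᵀ.mulVec V = V ⬝ᵥ M.mulVec V := by
    intro M
    rw [Matrix.mulVec_transpose, dotProduct_comm, ← Matrix.dotProduct_mulVec]
  have hqf : qf (η • ((Kbig w vst θs - Lbig w)ᵀ * Pmat vst θs
              + Pmat vst θs * (Kbig w vst θs - Lbig w))
        + (2 * α) • Pmat vst θs) v
      = 2 * (η * (V ⬝ᵥ (Kbig w vst θs).mulVec V - V ⬝ᵥ (Lbig w).mulVec V) + α * (V ⬝ᵥ V)) := by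
    rw [qf, ← hVdef, Matrix.add_mulVec, Matrix.smul_mulVec, Matrix.smul_mulVec,
      Matrix.add_mulVec, ← Matrix.mulVec_mulVec, ← Matrix.mulVec_mulVec, hPV, dotProduct_add,
      dotProduct_smul, dotProduct_smul, dotProduct_add, hVP, hMT, Matrix.sub_mulVec,
      dotProduct_sub, smul_eq_mul, smul_eq_mul]
    ring
  rw [hqf]
  set W := ∑ k, (V (k, 0) ^ 2 + V (k, 1) ^ 2) with hW
  have hVV : V ⬝ᵥ V = W := by
    simp only [dotProduct, Fintype.sum_prod_type, Fin.sum_univ_two, hW, sq]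
  have hWpos : 0 < W := by
    have hV0 : V ≠ 0 := by
      intro h
      apply hv
      ext p
      exact congrFun h p
    rw [← hVV]
    have h0 : 0 ≤ V ⬝ᵥ V := Finset.sum_nonneg fun p _ => mul_self_nonneg _
    exact lt_of_le_of_ne h0 fun h => hV0 (dotProduct_self_eq_zero.mp h.symm)
  -- K bound
  set C := ⨆ k, ∑ j, w j k * |1 - vst j / vst k * Real.cos (θs j - θs k)| with hC
  have hCle : ∀ k, ∑ j, w j k * |1 - vst j / vst k * Real.cos (θs j - θs k)| ≤ C :=
    fun k => le_ciSup (f := fun k => ∑ j, w j k * |1 - vst j / vst k * Real.cos (θs j - θs k)|)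
      (Set.finite_range _).bddAbove k
  have hC0 : 0 ≤ C := le_trans
    (Finset.sum_nonneg fun j _ => mul_nonneg (hw_nonneg j 0) (abs_nonneg _)) (hCle 0)
  have hK : V ⬝ᵥ (Kbig w vst θs).mulVec V ≤ C * W := by
    rw [aux_K, hW, Finset.mul_sum]
    refine Finset.sum_le_sum fun k _ => mul_le_mul_of_nonneg_right ?_ (by positivity)
    refine le_trans (Finset.sum_le_sum fun j _ => ?_) (hCle k)
    exact mul_le_mul_of_nonneg_left (le_abs_self _) (hw_nonneg j k)
  -- min and max
  set m := ⨅ k, vst k with hm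
  set M := ⨆ k, vst k with hM
  have hmle : ∀ k, m ≤ vst k := fun k => ciInf_le (Set.finite_range _).bddBelow k
  have hleM : ∀ k, vst k ≤ M := fun k => le_ciSup (Set.finite_range _).bddAbove k
  have hm0 : 0 < m := by
    obtain ⟨k, hk⟩ := exists_eq_ciInf_of_finite (f := vst)
    rw [hm, ← hk]; exact hvst k
  have hmM : m ≤ M := (hmle 0).trans (hleM 0)
  have hM0 : 0 < M := hm0.trans_le hmM
  set ρ := m ^ 2 / M ^ 2 with hρ
  have hρ0 : 0 < ρ := by positivity
  have hρ1 : ρ ≤ 1 := by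
    rw [hρ, div_le_one (by positivity)]
    exact pow_le_pow_left₀ hm0.le hmM 2
  set Λ := lambda2 (lapMat w) with hΛ
  have hαη : 0 < α / η := div_pos hα hη
  have hΛ0 : 0 < Λ := by
    have : 0 < (1 / 2 * ρ) * Λ := by linarith
    exact (mul_pos_iff_of_pos_left (by positivity)).mp this
  -- orthogonality
  set Q := ∑ n, vst n ^ 2 with hQ
  have hQ0 : 0 < Q := Finset.sum_pos (fun k _ => pow_pos (hvst k) 2) ⟨0, Finset.mem_univ _⟩
  have hs0 : (√Q)⁻¹ ≠ 0 := inv_ne_zero (Real.sqrt_pos.mpr hQ0).ne'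
  have ho1 : ∑ k, (vst k * Real.cos (θs k) * V (k, 0) + vst k * Real.sin (θs k) * V (k, 1)) = 0 := by
    have h := congrFun horth 0
    simp only [Matrix.mulVec, dotProduct, Matrix.transpose_apply, Smat, Matrix.of_apply, ← hQ,
      Fintype.sum_prod_type, Fin.sum_univ_two, Pi.zero_apply, mul_assoc, ← mul_add,
      ← Finset.mul_sum] at h
    have h' := (mul_eq_zero.mp h).resolve_left hs0
    rw [← h']
    refine Finset.sum_congr rfl fun k _ => ?_
    simp [Rot]; ring
  have ho2 : ∑ k, (vst k * Real.sin (θs k) * V (k, 0) - vst k * Real.cos (θs k) * V (k, 1)) = 0 := by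
    have h := congrFun horth 1
    simp only [Matrix.mulVec, dotProduct, Matrix.transpose_apply, Smat, Matrix.of_apply, ← hQ,
      Fintype.sum_prod_type, Fin.sum_univ_two, Pi.zero_apply, mul_assoc, ← mul_add,
      ← Finset.mul_sum] at h
    have h' := (mul_eq_zero.mp h).resolve_left hs0
    rw [← neg_eq_zero, ← h', ← Finset.sum_neg_distrib]
    refine Finset.sum_congr rfl fun k _ => ?_
    simp [Rot]; ring
  have hQ' : Q = ∑ k, ((vst k * Real.cos (θs k)) ^ 2 + (vst k * Real.sin (θs k)) ^ 2) := by
    rw [hQ]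
    refine Finset.sum_congr rfl fun k _ => ?_
    have := Real.sin_sq_add_cos_sq (θs k)
    linear_combination (-(vst k) ^ 2) * this
  set A := ∑ k, vst k * Real.cos (θs k) with hA
  set B := ∑ k, vst k * Real.sin (θs k) with hB
  have hAB : N * m ≤ A + B := by
    rw [hA, hB, ← Finset.sum_add_distrib]
    have : (N : ℝ) * m = ∑ k : Fin N, m := by simp
    rw [this]
    refine Finset.sum_le_sum fun k _ => ?_
    obtain ⟨hl, hu⟩ := hθ k
    have c0 : 0 ≤ Real.cos (θs k) := Real.cos_nonneg_of_neg_pi_div_two_le_of_le (by linarith [Real.pi_pos]) hu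
    have s0 : 0 ≤ Real.sin (θs k) := Real.sin_nonneg_of_nonneg_of_le_pi hl (by linarith [Real.pi_pos])
    have cs : 1 ≤ Real.cos (θs k) + Real.sin (θs k) := by
      nlinarith [Real.sin_sq_add_cos_sq (θs k), mul_nonneg c0 s0]
    nlinarith [hmle k, hvst k]
  have hAB2 : N ^ 2 * m ^ 2 / 2 ≤ A ^ 2 + B ^ 2 := by
    have : (N * m) ^ 2 ≤ (A + B) ^ 2 := pow_le_pow_left₀ (by positivity) hAB 2
    nlinarith [sq_nonneg (A - B)]
  have hQM : Q ≤ N * M ^ 2 := by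
    have : (N : ℝ) * M ^ 2 = ∑ k : Fin N, M ^ 2 := by simp
    rw [this, hQ]
    exact Finset.sum_le_sum fun k _ => pow_le_pow_left₀ (hvst k).le (hleM k) 2
  have hT : (N : ℝ) - (A ^ 2 + B ^ 2) / Q ≤ N * (1 - ρ / 2) := by
    have h1 : N * ρ / 2 ≤ (A ^ 2 + B ^ 2) / Q := by
      rw [le_div_iff₀ hQ0]
      calc N * ρ / 2 * Q ≤ N * ρ / 2 * (N * M ^ 2) :=
            mul_le_mul_of_nonneg_left hQM (by positivity)
        _ = N ^ 2 * m ^ 2 / 2 := by rw [hρ]; field_simp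
        _ ≤ _ := hAB2
    linarith
  have hcs := aux_cs _ _ (fun k => V (k, 0)) (fun k => V (k, 1)) Q (N * (1 - ρ / 2)) hQ' hQ0
    (mul_pos hNr (by linarith)) ho1 ho2 hT
  rw [← hW] at hcs
  have l0 := aux_lam hN0 w hw_symm hw_irrefl hw_nonneg (fun k => V (k, 0))
  have l1 := aux_lam hN0 w hw_symm hw_irrefl hw_nonneg (fun k => V (k, 1))
  have hL : Λ * (ρ / 2 * W) ≤ V ⬝ᵥ (Lbig w).mulVec V := by
    rw [aux_L]
    refine le_trans ?_ (add_le_add l0 l1)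
    rw [← mul_add]
    refine mul_le_mul_of_nonneg_left ?_ hΛ0.le
    have hWs : W = ∑ k, V (k, 0) ^ 2 + ∑ k, V (k, 1) ^ 2 := by rw [hW, Finset.sum_add_distrib]
    have h3 : ((∑ k, V (k, 0)) ^ 2 + (∑ k, V (k, 1)) ^ 2) / N ≤ (1 - ρ / 2) * W := by
      rw [div_le_iff₀ hNr]; linarith
    rw [add_div] at h3
    linarith
  rw [hVV]
  have hfin : (C + α / η) * W < (1 / 2 * ρ * Λ) * W := mul_lt_mul_of_pos_right hc hWpos
  have h7 : η * (V ⬝ᵥ (Kbig w vst θs).mulVec V - V ⬝ᵥ (Lbig w).mulVec V)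
      < η * (-(α / η) * W) := mul_lt_mul_of_pos_left (by linarith) hη
  have h8 : η * (-(α / η) * W) = -(α * W) := by field_simp
  linarith
end
end

section
/- Assume θ*_{k1} ∈ [0, π/2] for all k. Then for every v ∈ ℝ^{2N} it holds that vᵀ P 𝓛 P v ≥ (1/2)(v*_min²/v*_max²) λ₂(L) ‖v‖_S², where P = I_{2N} − 𝐒𝐒ᵀ, ‖v‖_S is the Euclidean distance of v to the subspace S = range(𝐒), v*_min := min_k v*_k, v*_max := max_k v*_k, and λ₂(L) is the second smallest eigenvalue of L. -/
noncomputable section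

open Real Matrix MeasureTheory Metric
open scoped BigOperators

lemma core_aux {N : ℕ} (hN : 2 ≤ N) (a b c d : Fin N → ℝ)
    (h1 : ∑ k, (c k * a k + d k * b k) = 0) (h2 : ∑ k, (c k * b k - d k * a k) = 0) :
    ((∑ k, c k) ^ 2 + (∑ k, d k) ^ 2) / N * (∑ k, (a k ^ 2 + b k ^ 2)) ≤
      (∑ k, (c k ^ 2 + d k ^ 2)) *
        (∑ k, (a k ^ 2 + b k ^ 2) - ((∑ k, a k) ^ 2 + (∑ k, b k) ^ 2) / N) := by
  have hN0 : (N : ℝ) ≠ 0 := by positivity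
  have cs : ∀ p q r s : Fin N → ℝ,
      (∑ k, (p k * r k + q k * s k)) ^ 2 + (∑ k, (p k * s k - q k * r k)) ^ 2 ≤
      (∑ k, (p k ^ 2 + q k ^ 2)) * (∑ k, (r k ^ 2 + s k ^ 2)) := by
    intro p q r s
    have e1 : (∑ k, (p k * r k + q k * s k)) ^ 2 + (∑ k, (p k * s k - q k * r k)) ^ 2 =
        ‖∑ k, (⟨p k, -q k⟩ : ℂ) * ⟨r k, s k⟩‖ ^ 2 := by
      rw [← Complex.normSq_eq_norm_sq, Complex.normSq_apply, Complex.re_sum, Complex.im_sum]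
      simp only [Complex.mul_re, Complex.mul_im]
      rw [← sq, ← sq]
      have e : ∀ k, p k * s k + -q k * r k = p k * s k - q k * r k := fun k => by ring
      have e' : ∀ k, p k * r k - -q k * s k = p k * r k + q k * s k := fun k => by ring
      simp only [e, e']
    have e2 : ∀ x y : ℝ, ‖(⟨x, y⟩ : ℂ)‖ ^ 2 = x ^ 2 + y ^ 2 := by
      intro x y
      rw [← Complex.normSq_eq_norm_sq, Complex.normSq_apply]; ring
    rw [e1]
    calc _ ≤ (∑ k, ‖(⟨p k, -q k⟩ : ℂ)‖ * ‖(⟨r k, s k⟩ : ℂ)‖) ^ 2 := by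
          gcongr
          refine (norm_sum_le _ _).trans (le_of_eq ?_)
          simp
      _ ≤ _ := Finset.sum_mul_sq_le_sq_mul_sq _ _ _
      _ = _ := by simp [e2]
  have cov : ∀ x y : Fin N → ℝ, ∑ k, (x k - (∑ j, x j) / N) * (y k - (∑ j, y j) / N) =
      ∑ k, x k * y k - (∑ j, x j) * (∑ j, y j) / N := by
    intro x y
    simp only [sub_mul, mul_sub, Finset.sum_sub_distrib, ← Finset.sum_mul, ← Finset.mul_sum]
    simp
    field_simp
    ring
  simp only [Finset.sum_add_distrib, Finset.sum_sub_distrib, sq] at h1 h2 ⊢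
  have h' := cs (fun k => c k - (∑ j, c j) / N) (fun k => d k - (∑ j, d j) / N)
    (fun k => a k - (∑ j, a j) / N) (fun k => b k - (∑ j, b j) / N)
  rw [Finset.sum_add_distrib, Finset.sum_sub_distrib, Finset.sum_add_distrib,
    Finset.sum_add_distrib] at h'
  simp only [sq (_ - _)] at h'
  simp only [cov] at h'
  set A := ∑ k, a k
  set B := ∑ k, b k
  set C := ∑ k, c k
  set D := ∑ k, d k
  set ca := ∑ k, c k * a k
  set db := ∑ k, d k * b k
  set cb := ∑ k, c k * b k
  set da := ∑ k, d k * a k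
  have e1 : ca = -db := by linarith
  have e2 : cb = da := by linarith
  rw [e1, e2] at h'
  field_simp at h' ⊢
  have hNp : (0 : ℝ) < N := by positivity
  refine le_of_mul_le_mul_left ?_ hNp
  nlinarith [h']

lemma lap_form {N : ℕ} (w : Fin N → Fin N → ℝ)
    (hw_symm : ∀ j k, w j k = w k j) (hw_irrefl : ∀ k, w k k = 0) (x : Fin N → ℝ) :
    x ⬝ᵥ (lapMat w).mulVec x = 1 / 2 * ∑ k, ∑ j, w k j * (x k - x j) ^ 2 := by
  have e : ∀ k, (lapMat w).mulVec x k = ∑ j, w k j * (x k - x j) := by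
    intro k
    have : ∀ j, lapMat w k j * x j = (if k = j then (∑ l, w k l) * x k else 0) - w k j * x j := by
      intro j
      by_cases h : k = j
      · subst h; simp [lapMat, hw_irrefl]
      · simp [lapMat, h]
    simp only [mulVec, dotProduct, this, Finset.sum_sub_distrib, mul_sub, Finset.sum_mul]
    simp
  simp only [dotProduct, e, Finset.mul_sum]
  have s1 : ∑ k, ∑ j, x k * (w k j * (x k - x j)) = ∑ k, ∑ j, x j * (w k j * (x j - x k)) := by
    rw [Finset.sum_comm]
    refine Finset.sum_congr rfl fun k _ => Finset.sum_congr rfl fun j _ => ?_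
    rw [hw_symm]
  have s2 : ∑ k, ∑ j, (1 / 2 * (w k j * (x k - x j) ^ 2)) =
      1 / 2 * (∑ k, ∑ j, x k * (w k j * (x k - x j)) + ∑ k, ∑ j, x j * (w k j * (x j - x k))) := by
    simp only [← Finset.sum_add_distrib, Finset.mul_sum]
    refine Finset.sum_congr rfl fun k _ => Finset.sum_congr rfl fun j _ => ?_
    ring
  rw [s2, ← s1]; ring

lemma lap_nonneg {N : ℕ} (w : Fin N → Fin N → ℝ)
    (hw_symm : ∀ j k, w j k = w k j) (hw_nonneg : ∀ j k, 0 ≤ w j k)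
    (hw_irrefl : ∀ k, w k k = 0) (x : Fin N → ℝ) :
    0 ≤ x ⬝ᵥ (lapMat w).mulVec x := by
  rw [lap_form w hw_symm hw_irrefl]
  exact mul_nonneg (by norm_num) (Finset.sum_nonneg fun k _ => Finset.sum_nonneg fun j _ =>
    mul_nonneg (hw_nonneg _ _) (sq_nonneg _))

lemma lam_nonneg {N : ℕ} (w : Fin N → Fin N → ℝ)
    (hw_symm : ∀ j k, w j k = w k j) (hw_nonneg : ∀ j k, 0 ≤ w j k)
    (hw_irrefl : ∀ k, w k k = 0) : 0 ≤ lambda2 (lapMat w) := by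
  apply Real.sInf_nonneg
  rintro r ⟨x, -, -, rfl⟩
  exact lap_nonneg w hw_symm hw_nonneg hw_irrefl x

lemma lam_le {N : ℕ} (hN : 2 ≤ N) (w : Fin N → Fin N → ℝ)
    (hw_symm : ∀ j k, w j k = w k j) (hw_nonneg : ∀ j k, 0 ≤ w j k)
    (hw_irrefl : ∀ k, w k k = 0) (x : Fin N → ℝ) :
    lambda2 (lapMat w) * (∑ k, x k ^ 2 - (∑ k, x k) ^ 2 / N) ≤ x ⬝ᵥ (lapMat w).mulVec x := by
  have hN0 : (N : ℝ) ≠ 0 := by positivity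
  set m := (∑ k, x k) / N with hm
  have e1 : ∑ k, x k ^ 2 - (∑ k, x k) ^ 2 / N = ∑ k, (x k - m) ^ 2 := by
    simp only [sub_sq, Finset.sum_add_distrib, Finset.sum_sub_distrib, ← Finset.sum_mul,
      ← Finset.mul_sum]
    simp [hm]
    field_simp
    ring
  have hs : ∑ k, (x k - m) = 0 := by
    simp [hm]; field_simp; ring
  rw [e1]
  set Z := ∑ k, (x k - m) ^ 2 with hZ
  have hZ0 : 0 ≤ Z := Finset.sum_nonneg fun _ _ => sq_nonneg _
  rcases hZ0.eq_or_lt with h0 | hpos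
  · rw [← h0, mul_zero]; exact lap_nonneg w hw_symm hw_nonneg hw_irrefl x
  · rw [← le_div_iff₀ hpos]
    apply csInf_le
    · refine ⟨0, ?_⟩
      rintro r ⟨x, -, -, rfl⟩
      exact lap_nonneg w hw_symm hw_nonneg hw_irrefl x
    · refine ⟨fun k => (x k - m) / √Z, ?_, ?_, ?_⟩
      · simp only [div_pow, Real.sq_sqrt hZ0, ← Finset.sum_div]
        exact div_self hpos.ne'
      · rw [← Finset.sum_div, hs, zero_div]
      · rw [lap_form w hw_symm hw_irrefl, lap_form w hw_symm hw_irrefl, mul_div_assoc,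
          Finset.sum_div]
        congr 1
        refine Finset.sum_congr rfl fun k _ => ?_
        rw [Finset.sum_div]
        refine Finset.sum_congr rfl fun j _ => ?_
        rw [← sub_div, div_pow, Real.sq_sqrt hZ0]
        ring

lemma StS {N : ℕ} (hN : 2 ≤ N) (vst θs : Fin N → ℝ) (hvst : ∀ k, 0 < vst k) :
    (Smat vst θs)ᵀ * Smat vst θs = 1 := by
  have hQ : 0 < ∑ n, vst n ^ 2 :=
    Finset.sum_pos (fun k _ => pow_pos (hvst k) 2) ⟨⟨0, by omega⟩, Finset.mem_univ _⟩
  have hsq := Real.sq_sqrt hQ.le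
  have hs0 : √(∑ n, vst n ^ 2) ≠ 0 := (Real.sqrt_pos.2 hQ).ne'
  have key : ∑ n, (√(∑ n, vst n ^ 2))⁻¹ ^ 2 * vst n ^ 2 = 1 := by
    rw [← Finset.mul_sum, inv_pow, hsq, inv_mul_cancel₀ hQ.ne']
  ext i j
  rw [mul_apply, Fintype.sum_prod_type]
  simp only [Fin.sum_univ_two, transpose_apply]
  fin_cases i <;> fin_cases j <;> simp [Smat, Rot]
  · rw [← key]
    refine Finset.sum_congr rfl fun k _ => ?_
    linear_combination ((√(∑ n, vst n ^ 2))⁻¹ ^ 2 * vst k ^ 2) * Real.sin_sq_add_cos_sq (θs k)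
  · refine Finset.sum_eq_zero fun k _ => ?_
    ring
  · refine Finset.sum_eq_zero fun k _ => ?_
    ring
  · rw [← key]
    refine Finset.sum_congr rfl fun k _ => ?_
    linear_combination ((√(∑ n, vst n ^ 2))⁻¹ ^ 2 * vst k ^ 2) * Real.sin_sq_add_cos_sq (θs k)

/-- vᵀP𝓛Pv ≥ (1/2)(v*_min²/v*_max²) λ₂(L) ‖v‖_S² when all θ*_{k1} ∈ [0, π/2]. -/
theorem stmt10 (N : ℕ) [NeZero N] (hN : 2 ≤ N)
    (w : Fin N → Fin N → ℝ)
    (hw_symm : ∀ j k, w j k = w k j) (hw_nonneg : ∀ j k, 0 ≤ w j k)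
    (hw_irrefl : ∀ k, w k k = 0) (hconn : (wGraph w).Connected)
    (vst : Fin N → ℝ) (hvst : ∀ k, 0 < vst k)
    (θs : Fin N → ℝ) (hθ0 : θs 0 = 0)
    (hθhalf : ∀ k, θs k ∈ Set.Icc (0 : ℝ) (π / 2))
    (v : St N) :
    1 / 2 * ((⨅ k, vst k) ^ 2 / (⨆ k, vst k) ^ 2) * lambda2 (lapMat w)
        * infDist v (SsetR vst θs) ^ 2
      ≤ qf (Pmat vst θs * Lbig w * Pmat vst θs) v := by
  set S := Smat vst θs with hS
  set P := Pmat vst θs with hP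
  have hPS : P = 1 - S * Sᵀ := rfl
  have hPt : Pᵀ = P := by
    rw [hPS]; simp [transpose_sub, transpose_mul]
  have hSP : Sᵀ * P = 0 := by
    rw [hPS, Matrix.mul_sub, ← Matrix.mul_assoc, StS hN vst θs hvst]; simp
  set y := P.mulVec (ofSt v) with hy
  have hqf : qf (P * Lbig w * P) v = y ⬝ᵥ (Lbig w).mulVec y := by
    rw [qf, Matrix.mul_assoc, ← mulVec_mulVec, ← mulVec_mulVec, dotProduct_mulVec,
      ← mulVec_transpose, hPt]
  set a : Fin N → ℝ := fun k => y (k, 0) with ha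
  set b : Fin N → ℝ := fun k => y (k, 1) with hb
  have hqf2 : y ⬝ᵥ (Lbig w).mulVec y =
      a ⬝ᵥ (lapMat w).mulVec a + b ⬝ᵥ (lapMat w).mulVec b := by
    simp [dotProduct, mulVec, Fintype.sum_prod_type, Fin.sum_univ_two, Lbig, ha, hb,
      Finset.sum_add_distrib]
  have hdist : infDist v (SsetR vst θs) ^ 2 ≤ ∑ k, (a k ^ 2 + b k ^ 2) := by
    have h1 : infDist v (SsetR vst θs) ≤ dist v (toSt (S.mulVec (Sᵀ.mulVec (ofSt v)))) :=
      infDist_le_dist_of_mem ⟨_, rfl⟩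
    have h2 : dist v (toSt (S.mulVec (Sᵀ.mulVec (ofSt v)))) ^ 2 = ∑ k, (a k ^ 2 + b k ^ 2) := by
      rw [EuclideanSpace.dist_eq, Real.sq_sqrt (Finset.sum_nonneg fun _ _ => sq_nonneg _),
        Fintype.sum_prod_type]
      have : ∀ p, dist (v p) ((toSt (S.mulVec (Sᵀ.mulVec (ofSt v)))) p) ^ 2 = y p ^ 2 := by
        intro p
        rw [Real.dist_eq, sq_abs, hy, hPS, sub_mulVec, one_mulVec, mulVec_mulVec]
        rfl
      simp only [this, Fin.sum_univ_two, ha, hb]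
    rw [← h2]
    exact pow_le_pow_left₀ infDist_nonneg h1 2
  have hQ : 0 < ∑ n, vst n ^ 2 :=
    Finset.sum_pos (fun k _ => pow_pos (hvst k) 2) ⟨⟨0, by omega⟩, Finset.mem_univ _⟩
  have hs0 : √(∑ n, vst n ^ 2) ≠ 0 := (Real.sqrt_pos.2 hQ).ne'
  have horth : Sᵀ.mulVec y = 0 := by
    rw [hy, mulVec_mulVec, hSP, zero_mulVec]
  set c : Fin N → ℝ := fun k => vst k * Real.cos (θs k) with hc
  set d : Fin N → ℝ := fun k => vst k * Real.sin (θs k) with hd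
  have o1 : ∑ k, (c k * a k + d k * b k) = 0 := by
    have h := congrFun horth 0
    have e : Sᵀ.mulVec y 0 = (√(∑ n, vst n ^ 2))⁻¹ * ∑ k, (c k * a k + d k * b k) := by
      rw [Finset.mul_sum]
      simp only [mulVec, dotProduct, Fintype.sum_prod_type, Fin.sum_univ_two]
      refine Finset.sum_congr rfl fun k _ => ?_
      simp [hS, Smat, Rot, ha, hb, hc, hd]
      ring
    rw [e] at h
    exact (mul_eq_zero.1 h).resolve_left (inv_ne_zero hs0)
  have o2 : ∑ k, (c k * b k - d k * a k) = 0 := by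
    have h := congrFun horth 1
    have e : Sᵀ.mulVec y 1 = (√(∑ n, vst n ^ 2))⁻¹ * ∑ k, (c k * b k - d k * a k) := by
      rw [Finset.mul_sum]
      simp only [mulVec, dotProduct, Fintype.sum_prod_type, Fin.sum_univ_two]
      refine Finset.sum_congr rfl fun k _ => ?_
      simp [hS, Smat, Rot, ha, hb, hc, hd]
      ring
    rw [e] at h
    exact (mul_eq_zero.1 h).resolve_left (inv_ne_zero hs0)
  have hcore := core_aux hN a b c d o1 o2
  set m := ⨅ k, vst k with hm
  set M := ⨆ k, vst k with hM
  have hml : ∀ k, m ≤ vst k := fun k => ciInf_le (Set.finite_range vst).bddBelow k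
  have hMl : ∀ k, vst k ≤ M := fun k => le_ciSup (Set.finite_range vst).bddAbove k
  have hm0 : 0 ≤ m := Real.iInf_nonneg fun k => (hvst k).le
  have hM0 : 0 < M := (hvst 0).trans_le (hMl 0)
  have hNpos : (0 : ℝ) < N := by positivity
  have hQM : ∑ k, (c k ^ 2 + d k ^ 2) ≤ N * M ^ 2 := by
    calc ∑ k, (c k ^ 2 + d k ^ 2) ≤ ∑ k : Fin N, M ^ 2 := by
          refine Finset.sum_le_sum fun k _ => ?_
          have : c k ^ 2 + d k ^ 2 = vst k ^ 2 := by
            simp only [hc, hd]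
            linear_combination vst k ^ 2 * Real.sin_sq_add_cos_sq (θs k)
          rw [this]
          exact pow_le_pow_left₀ (hvst k).le (hMl k) 2
      _ = _ := by simp
  have hp : N * m ^ 2 / 2 ≤ ((∑ k, c k) ^ 2 + (∑ k, d k) ^ 2) / N := by
    have h1 : N * m ≤ ∑ k, c k + ∑ k, d k := by
      rw [← Finset.sum_add_distrib]
      calc N * m = ∑ k : Fin N, m := by simp
        _ ≤ _ := by
          refine Finset.sum_le_sum fun k _ => ?_
          have hcos : 0 ≤ Real.cos (θs k) :=
            Real.cos_nonneg_of_mem_Icc ⟨by linarith [(hθhalf k).1, Real.pi_pos], (hθhalf k).2⟩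
          have hsin : 0 ≤ Real.sin (θs k) :=
            Real.sin_nonneg_of_nonneg_of_le_pi (hθhalf k).1
              (by linarith [(hθhalf k).2, Real.pi_pos])
          have h1 : 1 ≤ Real.cos (θs k) + Real.sin (θs k) := by
            nlinarith [Real.sin_sq_add_cos_sq (θs k), mul_nonneg hcos hsin]
          have := mul_le_mul_of_nonneg_left h1 (hvst k).le
          simp only [hc, hd]
          linarith [hml k]
    rw [le_div_iff₀ hNpos]
    have h2 := pow_le_pow_left₀ (by positivity) h1 2
    nlinarith [sq_nonneg (∑ k, c k - ∑ k, d k)]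
  set W := ∑ k, (a k ^ 2 + b k ^ 2) with hW
  have hW0 : 0 ≤ W := Finset.sum_nonneg fun _ _ => by positivity
  set Z := W - ((∑ k, a k) ^ 2 + (∑ k, b k) ^ 2) / N with hZ
  have hZe : Z = (∑ k, a k ^ 2 - (∑ k, a k) ^ 2 / N) + (∑ k, b k ^ 2 - (∑ k, b k) ^ 2 / N) := by
    rw [hZ, hW, Finset.sum_add_distrib]; ring
  have hZ0 : 0 ≤ Z := by
    have h1 := sq_sum_le_card_mul_sum_sq (s := Finset.univ) (f := a)
    have h2 := sq_sum_le_card_mul_sum_sq (s := Finset.univ) (f := b)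
    simp only [Finset.card_univ, Fintype.card_fin] at h1 h2
    rw [hZe]
    have h3 : (∑ k, a k) ^ 2 / N ≤ ∑ k, a k ^ 2 := by
      rw [div_le_iff₀ hNpos]; linarith
    have h4 : (∑ k, b k) ^ 2 / N ≤ ∑ k, b k ^ 2 := by
      rw [div_le_iff₀ hNpos]; linarith
    linarith
  have hfin : 1 / 2 * (m ^ 2 / M ^ 2) * W ≤ Z := by
    have h1 : N * m ^ 2 / 2 * W ≤ N * M ^ 2 * Z :=
      (mul_le_mul_of_nonneg_right hp hW0).trans
        (hcore.trans (mul_le_mul_of_nonneg_right hQM hZ0))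
    have h2 : m ^ 2 / 2 * W ≤ M ^ 2 * Z := by
      refine le_of_mul_le_mul_left ?_ hNpos
      linarith
    have : 1 / 2 * (m ^ 2 / M ^ 2) * W = (m ^ 2 / 2 * W) / M ^ 2 := by ring
    rw [this, div_le_iff₀ (by positivity)]
    linarith
  have hl := lam_nonneg w hw_symm hw_nonneg hw_irrefl
  have la := lam_le hN w hw_symm hw_nonneg hw_irrefl a
  have lb := lam_le hN w hw_symm hw_nonneg hw_irrefl b
  rw [hqf, hqf2]
  calc _ ≤ 1 / 2 * (m ^ 2 / M ^ 2) * lambda2 (lapMat w) * W :=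
        mul_le_mul_of_nonneg_left hdist (by positivity)
    _ = lambda2 (lapMat w) * (1 / 2 * (m ^ 2 / M ^ 2) * W) := by ring
    _ ≤ lambda2 (lapMat w) * Z := mul_le_mul_of_nonneg_left hfin hl
    _ ≤ _ := by rw [hZe, mul_add]; linarith
end
end

section
/- Let N ≥ 1, let v*_k > 0 for k = 1,…,N with v*_min := min_k v*_k, and let θ*_{k1} ∈ [0, π/2] for k = 1,…,N with θ*_{11} = 0. Then Σ_{k=1}^N Σ_{j=1}^N v*_j v*_k cos(θ*_{j1} − θ*_{k1}) ≥ (1/2) N² v*_min². -/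
noncomputable section

open Real

/-- if v*_k > 0 and θ*_{k1} ∈ [0, π/2] with θ*_{11} = 0, then
Σ_k Σ_j v*_j v*_k cos(θ*_{j1} − θ*_{k1}) ≥ (1/2) N² (min_k v*_k)². -/
theorem stmt11 (N : ℕ) [NeZero N] (hN : 1 ≤ N)
    (vst : Fin N → ℝ) (hvst : ∀ k, 0 < vst k)
    (θs : Fin N → ℝ) (hθ : ∀ k, θs k ∈ Set.Icc (0 : ℝ) (π / 2)) (hθ0 : θs 0 = 0) :
    1 / 2 * (N : ℝ) ^ 2 * (⨅ k, vst k) ^ 2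
      ≤ ∑ k, ∑ j, vst j * vst k * Real.cos (θs j - θs k) := by
  have hm0 : 0 ≤ ⨅ k, vst k := Real.iInf_nonneg fun k => (hvst k).le
  have hm : ∀ k, (⨅ k, vst k) ≤ vst k := fun k => ciInf_le (Set.finite_range vst).bddBelow k
  generalize (⨅ k, vst k) = m at hm0 hm
  have key : ∑ k, ∑ j, vst j * vst k * Real.cos (θs j - θs k)
      = (∑ k, vst k * Real.cos (θs k)) ^ 2 + (∑ k, vst k * Real.sin (θs k)) ^ 2 := by
    rw [sq, sq, Finset.sum_mul_sum, Finset.sum_mul_sum, ← Finset.sum_add_distrib]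
    refine Finset.sum_congr rfl fun k _ => ?_
    rw [← Finset.sum_add_distrib]
    refine Finset.sum_congr rfl fun j _ => ?_
    rw [Real.cos_sub]
    ring
  have hcs : (N : ℝ) * m
      ≤ (∑ k, vst k * Real.cos (θs k)) + (∑ k, vst k * Real.sin (θs k)) := by
    rw [← Finset.sum_add_distrib]
    have h : ∑ _k : Fin N, m ≤ ∑ k, (vst k * Real.cos (θs k) + vst k * Real.sin (θs k)) := by
      refine Finset.sum_le_sum fun k _ => ?_
      obtain ⟨h1, h2⟩ := hθ k
      have hc : 0 ≤ Real.cos (θs k) := Real.cos_nonneg_of_mem_Icc ⟨by linarith, h2⟩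
      have hs : 0 ≤ Real.sin (θs k) := Real.sin_nonneg_of_nonneg_of_le_pi h1 (by linarith)
      have h3 := Real.sin_sq_add_cos_sq (θs k)
      have h4 : 1 ≤ Real.cos (θs k) + Real.sin (θs k) := by
        nlinarith [mul_nonneg hc hs]
      nlinarith [hm k, hvst k]
    simpa using h
  rw [key]
  have h0 : 0 ≤ (N : ℝ) * m := by positivity
  generalize (∑ k, vst k * Real.cos (θs k)) = C at *
  generalize (∑ k, vst k * Real.sin (θs k)) = S at *
  have h5 := pow_le_pow_left₀ h0 hcs 2
  nlinarith [sq_nonneg (C - S)]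
end
end
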